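/- Let X be a bounded geometry metric space and G(X) the associated coarse groupoid. Then there is a canonical isomorphism H_*(G(X)) ≅ H_*^{uf}(X) between the groupoid homology of G(X) and the uniformly finite homology of X. -/

import Mathlib

noncomputable section

open Function Set

attribute [local instance] Classical.propDecidable

universe u v w

/-- `ℤ[Y]`: the set of compactly supported continuous `ℤ`-valued functions on a space `Y`
(`ℤ` carries the discrete topology). -/
def ccZ (Y : Type v) [TopologicalSpace Y] : Set (Y → ℤ) :=
  {f | Continuous f ∧ HasCompactSupport f}

/-- `ℤ[Y]` as an additive subgroup of the group of all functions `Y → ℤ`. -/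
def ccZSub (Y : Type v) [TopologicalSpace Y] : AddSubgroup (Y → ℤ) where
  carrier := ccZ Y
  add_mem' {a b} ha hb := ⟨ha.1.add hb.1, ha.2.add hb.2⟩
  zero_mem' := ⟨continuous_const, by
    have h : tsupport (0 : Y → ℤ) = ∅ := by simp [tsupport]
    unfold HasCompactSupport
    rw [h]; exact isCompact_empty⟩
  neg_mem' {a} ha := ⟨ha.1.neg, HasCompactSupport.neg ha.2⟩

@[simp] lemma mem_ccZSub {Y : Type v} [TopologicalSpace Y] (f : Y → ℤ) :
    f ∈ ccZSub Y ↔ f ∈ ccZ Y := Iff.rfl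

/-- The pushforward `φ_*(a)(y) = ∑_{x ∈ φ⁻¹(y)} a x` of a function along a map. -/
def pushf {X : Type v} {Y : Type w} (φ : X → Y) (a : X → ℤ) : Y → ℤ :=
  fun y => ∑ᶠ x ∈ φ ⁻¹' {y}, a x

/-- The generated equivalence relation. -/
inductive RelGen {α : Sort*} (r : α → α → Prop) : α → α → Prop
  | rel {x y} : r x y → RelGen r x y
  | refl (x) : RelGen r x x
  | symm {x y} : RelGen r x y → RelGen r y x
  | trans {x y z} : RelGen r x y → RelGen r y z → RelGen r x z

/-- The purely algebraic data of a topological groupoid, with arrow space `G`: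
the set of units, source and range maps (valued in units), a (junk-total)
partially defined composition, and inversion. -/
structure GroupoidData (G : Type u) where
  unitSpace : Set G
  source : G → G
  range : G → G
  mul : G → G → G
  inv : G → G

namespace GroupoidData

variable {G : Type u} (D : GroupoidData G)

/-- The product of two subsets of a groupoid. -/
def setMul (A B : Set G) : Set G :=
  {w | ∃ a ∈ A, ∃ b ∈ B, D.source a = D.range b ∧ w = D.mul a b}

/-- A bisection: a subset on which both the source and the range map are injective. -/
def IsBisection (B : Set G) : Prop := Set.InjOn D.source B ∧ Set.InjOn D.range B

/-- Membership in the subgroupoid generated by a subset `A` of `G`. -/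
inductive InSubgroupoid (A : Set G) : G → Prop
  | base {g} : g ∈ A → InSubgroupoid A g
  | inv {g} : InSubgroupoid A g → InSubgroupoid A (D.inv g)
  | mul {g h} : InSubgroupoid A g → InSubgroupoid A h → D.source g = D.range h →
      InSubgroupoid A (D.mul g h)

/-- `G` is a (locally compact, Hausdorff, étale) ample groupoid: all the algebraic groupoid
axioms hold, the structure maps are suitably continuous, the source and range maps are local
homeomorphisms onto the open unit space (étaleness), and the compact open bisections form a
basis for the topology (ampleness). -/
structure IsAmpleGroupoid [TopologicalSpace G] : Prop where
  t2 : T2Space G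
  locallyCompact : LocallyCompactSpace G
  source_mem : ∀ g, D.source g ∈ D.unitSpace
  range_mem : ∀ g, D.range g ∈ D.unitSpace
  source_unit : ∀ x ∈ D.unitSpace, D.source x = x
  range_unit : ∀ x ∈ D.unitSpace, D.range x = x
  source_mul : ∀ g h, D.source g = D.range h → D.source (D.mul g h) = D.source h
  range_mul : ∀ g h, D.source g = D.range h → D.range (D.mul g h) = D.range g
  mul_assoc : ∀ g h k, D.source g = D.range h → D.source h = D.range k →
      D.mul (D.mul g h) k = D.mul g (D.mul h k)
  source_inv : ∀ g, D.source (D.inv g) = D.range g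
  range_inv : ∀ g, D.range (D.inv g) = D.source g
  inv_mul : ∀ g, D.mul (D.inv g) g = D.source g
  mul_inv : ∀ g, D.mul g (D.inv g) = D.range g
  unit_mul : ∀ g, D.mul (D.range g) g = g
  mul_unit : ∀ g, D.mul g (D.source g) = g
  continuous_inv : Continuous D.inv
  continuous_mul : Continuous fun p : {p : G × G // D.source p.1 = D.range p.2} =>
      D.mul p.1.1 p.1.2
  open_unitSpace : IsOpen D.unitSpace
  etale_source : IsLocalHomeomorph D.source
  etale_range : IsLocalHomeomorph D.range
  ample : ∀ g : G, ∀ U : Set G, IsOpen U → g ∈ U →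
      ∃ B : Set G, g ∈ B ∧ B ⊆ U ∧ IsOpen B ∧ IsCompact B ∧ D.IsBisection B

/-- A groupoid is principal if every arrow with equal range and source is a unit. -/
def IsPrincipal : Prop := ∀ g, D.source g = D.range g → g ∈ D.unitSpace

/-- `G` has dynamic asymptotic dimension at most `d`: for every relatively compact open
subset `K` of `G` there are `d+1` open subsets of the unit space covering `r(K) ∪ s(K)` such
that the subgroupoid generated by the elements of `K` with source and range in one of these
sets is relatively compact. -/
def DadLE [TopologicalSpace G] (d : ℕ) : Prop :=
  ∀ K : Set G, IsOpen K → IsCompact (closure K) →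
    ∃ U : Fin (d + 1) → Set G,
      (∀ i, IsOpen (U i) ∧ U i ⊆ D.unitSpace) ∧
      (D.range '' K ∪ D.source '' K ⊆ ⋃ i, U i) ∧
      ∀ i, IsCompact (closure
        {g | D.InSubgroupoid {g ∈ K | D.source g ∈ U i ∧ D.range g ∈ U i} g})

/-! ### Matui's complex computing the Crainic–Moerdijk groupoid homology `H_*(G)` -/

/-- The space `G^(n)` of composable `n`-tuples. -/
def Comps (n : ℕ) : Set (Fin n → G) :=
  {v | ∀ (j : Fin n) (h : (j : ℕ) + 1 < n), D.source (v j) = D.range (v ⟨(j : ℕ) + 1, h⟩)}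

/-- The face maps of Matui's complex on tuples:
`d_0` drops the first entry, `d_{n+1}` drops the last one, and the intermediate
`d_i` compose two consecutive entries. -/
def dface (n : ℕ) (i : Fin (n + 2)) (v : Fin (n + 1) → G) : Fin n → G := fun j =>
  if (j : ℕ) + 1 < (i : ℕ) then v j.castSucc
  else if (j : ℕ) + 1 = (i : ℕ) then D.mul (v j.castSucc) (v j.succ)
  else v j.succ

/-- The spaces of Matui's complex: `G^0` in degree `0`, and `G^(n)` in degree `n ≥ 1`. -/
def MSp : ℕ → Type u
  | 0 => ↥(D.unitSpace)
  | (n + 1) => ↥(D.Comps (n + 1))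

instance [TopologicalSpace G] (n : ℕ) : TopologicalSpace (D.MSp n) := by
  cases n with
  | zero => exact (inferInstance : TopologicalSpace ↥(D.unitSpace))
  | succ n => exact (inferInstance : TopologicalSpace ↥(D.Comps (n + 1)))

/-- The boundary maps of Matui's complex, given by alternating sums of pushforwards
along the face maps (in degree one, `∂₁ = s_* - r_*`). -/
def mBdry : (n : ℕ) → ((D.MSp (n + 1)) → ℤ) → (D.MSp n) → ℤ
  | 0, a => fun u =>
      (∑ᶠ x ∈ {x : ↥(D.Comps 1) | D.source (x.1 0) = u.1}, a x)
        - ∑ᶠ x ∈ {x : ↥(D.Comps 1) | D.range (x.1 0) = u.1}, a x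
  | (n + 1), a => fun y =>
      ∑ i : Fin (n + 3), (-1 : ℤ) ^ (i : ℕ) *
        ∑ᶠ x ∈ {x : ↥(D.Comps (n + 2)) | D.dface (n + 1) i x.1 = y.1}, a x

variable [TopologicalSpace G]

/-- The cycle subgroup of Matui's complex in degree `n`. -/
def mCycles : (n : ℕ) → AddSubgroup ((D.MSp n) → ℤ)
  | 0 => ccZSub (D.MSp 0)
  | (n + 1) => AddSubgroup.closure {a | a ∈ ccZ (D.MSp (n + 1)) ∧ D.mBdry n a = 0}

/-- The boundary subgroup of Matui's complex in degree `n`. -/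
def mBdries (n : ℕ) : AddSubgroup ((D.MSp n) → ℤ) :=
  AddSubgroup.closure {c | ∃ a ∈ ccZ (D.MSp (n + 1)), D.mBdry n a = c}

/-- The groupoid homology `H_n(G)` (Crainic–Moerdijk homology, computed by Matui's complex). -/
def Homology (n : ℕ) : Type u :=
  (D.mCycles n) ⧸ AddSubgroup.comap (D.mCycles n).subtype (D.mBdries n)

instance (n : ℕ) : AddCommGroup (D.Homology n) :=
  QuotientAddGroup.Quotient.addCommGroup _

/-- The homology class of a cycle. -/
def hcls {n : ℕ} (a : (D.MSp n) → ℤ) (ha : a ∈ D.mCycles n) : D.Homology n :=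
  QuotientAddGroup.mk ⟨a, ha⟩

end GroupoidData
/-! ### Bounded geometry, uniformly finite homology, and the coarse groupoid -/

section Coarse

variable (X : Type u) [MetricSpace X]

/-- A metric space has bounded geometry if the cardinalities of `r`-balls are uniformly
bounded, for every `r`. -/
def BoundedGeometry : Prop :=
  ∀ r : ℝ, ∃ N : ℕ, ∀ x : X, ∃ s : Finset X, Metric.closedBall x r ⊆ ↑s ∧ s.card ≤ N

/-- The Block–Weinberger uniformly finite `n`-chains of `X`: bounded integer-valued
functions on `X^{n+1}` supported on tuples of uniformly bounded diameter. -/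
def ufChains (n : ℕ) : AddSubgroup ((Fin (n + 1) → X) → ℤ) where
  carrier := {c | (∃ M : ℤ, ∀ v, |c v| ≤ M) ∧
      ∃ r : ℝ, ∀ v, c v ≠ 0 → ∀ i j, dist (v i) (v j) ≤ r}
  add_mem' {a b} ha hb := by
    obtain ⟨⟨M, hM⟩, r, hr⟩ := ha
    obtain ⟨⟨M', hM'⟩, r', hr'⟩ := hb
    refine ⟨⟨M + M', fun v => le_trans (abs_add_le _ _) (add_le_add (hM v) (hM' v))⟩,
      max r r', fun v hv i j => ?_⟩
    by_cases h : a v = 0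
    · exact le_trans (hr' v (by simpa [Pi.add_apply, h] using hv) i j) (le_max_right _ _)
    · exact le_trans (hr v h i j) (le_max_left _ _)
  zero_mem' := ⟨⟨0, fun v => by simp⟩, 0, fun v hv => absurd rfl hv⟩
  neg_mem' {a} ha := by
    obtain ⟨⟨M, hM⟩, r, hr⟩ := ha
    exact ⟨⟨M, fun v => by simpa using hM v⟩, r, fun v hv => hr v (by simpa using hv)⟩

/-- The boundary map of uniformly finite homology: the alternating sum of the pushforwards
along the coordinate-deleting maps. -/
def ufBdry (n : ℕ) (c : (Fin (n + 2) → X) → ℤ) : (Fin (n + 1) → X) → ℤ :=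
  fun y => ∑ i : Fin (n + 2), (-1 : ℤ) ^ (i : ℕ) *
    pushf (fun v : Fin (n + 2) → X => fun j => v (i.succAbove j)) c y

/-- The cycles of the uniformly finite chain complex. -/
def ufCycles : (n : ℕ) → AddSubgroup ((Fin (n + 1) → X) → ℤ)
  | 0 => ufChains X 0
  | (n + 1) => AddSubgroup.closure {c | c ∈ ufChains X (n + 1) ∧ ufBdry X n c = 0}

/-- The boundaries of the uniformly finite chain complex. -/
def ufBdries (n : ℕ) : AddSubgroup ((Fin (n + 1) → X) → ℤ) :=
  AddSubgroup.closure {c | ∃ b ∈ ufChains X (n + 1), ufBdry X n b = c}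

/-- The uniformly finite homology `H_*^{uf}(X)` of Block and Weinberger. -/
def ufHomology (n : ℕ) : Type u :=
  (ufCycles X n) ⧸ AddSubgroup.comap (ufCycles X n).subtype (ufBdries X n)

instance (n : ℕ) : AddCommGroup (ufHomology X n) :=
  QuotientAddGroup.Quotient.addCommGroup _

end Coarse
section CoarseGroupoid

variable (X : Type u) [MetricSpace X]

/-- The entourage `E_r`: the closure in `βX × βX` of the set of pairs of points of `X` at
distance at most `r`. -/
def Ent (r : ℝ) : Set (StoneCech X × StoneCech X) :=
  closure {p | ∃ x y : X, dist x y ≤ r ∧ p = (stoneCechUnit x, stoneCechUnit y)}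

/-- The underlying set of the coarse groupoid `G(X) = ⋃_{r > 0} E_r ⊆ βX × βX`. -/
def CoarseGpd : Type u :=
  {p : StoneCech X × StoneCech X // ∃ r : ℝ, 0 < r ∧ p ∈ Ent X r}

/-- The weak topology on the coarse groupoid determined by the union `⋃ E_r`. -/
def coarseTop : TopologicalSpace (CoarseGpd X) :=
  ⨆ r : {r : ℝ // 0 < r},
    TopologicalSpace.coinduced
      (fun q : ↥(Ent X r.1) => (⟨q.1, r.1, r.2, q.2⟩ : CoarseGpd X)) inferInstance

lemma diag_mem_Ent (b : StoneCech X) : (b, b) ∈ Ent X 1 := by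
  have h1 : b ∈ closure (Set.range (stoneCechUnit : X → StoneCech X)) := by
    rw [denseRange_stoneCechUnit.closure_range]; trivial
  have hc : Continuous (fun c : StoneCech X => ((c, c) : StoneCech X × StoneCech X)) :=
    continuous_id.prodMk continuous_id
  have h2 : (b, b) ∈ closure ((fun c : StoneCech X => ((c, c) : StoneCech X × StoneCech X))
      '' Set.range (stoneCechUnit : X → StoneCech X)) :=
    (image_closure_subset_closure_image hc) ⟨b, h1, rfl⟩
  refine closure_mono ?_ h2
  rintro p ⟨c, ⟨x, rfl⟩, rfl⟩
  exact ⟨x, x, by simp, rfl⟩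

/-- The pair-groupoid structure on the coarse groupoid `G(X)`. -/
def coarseData : GroupoidData (CoarseGpd X) where
  unitSpace := {p | p.1.1 = p.1.2}
  source p := ⟨(p.1.2, p.1.2), 1, one_pos, diag_mem_Ent X p.1.2⟩
  range p := ⟨(p.1.1, p.1.1), 1, one_pos, diag_mem_Ent X p.1.1⟩
  mul p q :=
    if h : ∃ r : ℝ, 0 < r ∧ (p.1.1, q.1.2) ∈ Ent X r then ⟨(p.1.1, q.1.2), h⟩ else p
  inv p := if h : ∃ r : ℝ, 0 < r ∧ (p.1.2, p.1.1) ∈ Ent X r then ⟨(p.1.2, p.1.1), h⟩ else p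

end CoarseGroupoid
namespace CG

section Abstract

lemma ultra_color {A : Type*} {K : Type*} [Finite K] (κ : A → K) (u : Ultrafilter A) :
    ∃ k, ∀ᶠ a in u, κ a = k := by
  have h : ∃ k ∈ (Set.univ : Set K), κ ⁻¹' {k} ∈ u := by
    rw [← Ultrafilter.finite_biUnion_mem_iff Set.finite_univ]
    filter_upwards with a
    simp
  obtain ⟨k, -, hk⟩ := h
  exact ⟨k, hk⟩

lemma ultra_eq_of_injOn {A B : Type*} {φ : A → B} {S : Set A} (hS : Set.InjOn φ S)
    {u u' : Ultrafilter A} (h : S ∈ u) (h' : S ∈ u') (he : u.map φ = u'.map φ) : u = u' := by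
  symm
  apply Ultrafilter.eq_of_le
  intro a ha
  have h1 : φ '' (a ∩ S) ∈ u.map φ := by
    rw [Ultrafilter.mem_map]
    exact Filter.mem_of_superset (Filter.inter_mem ha h) (Set.subset_preimage_image _ _)
  rw [he, Ultrafilter.mem_map] at h1
  refine Filter.mem_of_superset (Filter.inter_mem h1 h') ?_
  rintro x ⟨⟨y, ⟨hy, hyS⟩, hyx⟩, hxS⟩
  exact hS hyS hxS hyx ▸ hy

def ext {A : Type*} (c : A → ℤ) (u : Ultrafilter A) : ℤ :=
  if h : ∃ k, ∀ᶠ a in u, c a = k then h.choose else 0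

lemma ext_eq {A : Type*} {c : A → ℤ} {u : Ultrafilter A} {k : ℤ} (h : ∀ᶠ a in u, c a = k) :
    ext c u = k := by
  have h' : ∃ k, ∀ᶠ a in u, c a = k := ⟨k, h⟩
  rw [ext, dif_pos h']
  obtain ⟨a, ha, hb⟩ := (h'.choose_spec.and h).exists
  rw [← ha, hb]

lemma ext_spec {A : Type*} {c : A → ℤ} {M : ℤ} (hM : ∀ a, |c a| ≤ M) (u : Ultrafilter A) :
    ∀ᶠ a in u, c a = ext c u := by
  obtain ⟨k, hk⟩ := ultra_color (fun a => (⟨c a, abs_le.1 (hM a)⟩ : Set.Icc (-M) M)) u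
  have : ∀ᶠ a in u, c a = k := by
    filter_upwards [hk] with a ha
    rw [← ha]
  rwa [ext_eq this]

lemma ext_add {A : Type*} {c d : A → ℤ} {M M' : ℤ} (hM : ∀ a, |c a| ≤ M) (hM' : ∀ a, |d a| ≤ M')
    (u : Ultrafilter A) : ext (c + d) u = ext c u + ext d u := by
  apply ext_eq
  filter_upwards [ext_spec hM u, ext_spec hM' u] with a h1 h2
  simp [h1, h2]

lemma ext_zero {A : Type*} (u : Ultrafilter A) : ext (0 : A → ℤ) u = 0 :=
  ext_eq (by simp)

lemma ext_pure {A : Type*} (c : A → ℤ) (a : A) : ext c (pure a) = c a :=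
  ext_eq (by simp)

structure PG {A B : Type*} (φ : A → B) (c : A → ℤ) : Prop where
  bdd : ∃ M : ℤ, ∀ a, |c a| ≤ M
  fin : ∀ b, (φ ⁻¹' {b} ∩ support c).Finite
  pbdd : ∃ M : ℤ, ∀ b, |pushf φ c b| ≤ M
  ufin : ∀ w, ({u : Ultrafilter A | u.map φ = w} ∩ support (ext c)).Finite
  eq : ∀ w, ∑ᶠ u ∈ {u : Ultrafilter A | u.map φ = w}, ext c u = ext (pushf φ c) w

lemma PG.add {A B : Type*} {φ : A → B} {c d : A → ℤ} (hc : PG φ c) (hd : PG φ d) :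
    PG φ (c + d) := by
  obtain ⟨M, hM⟩ := hc.bdd
  obtain ⟨M', hM'⟩ := hd.bdd
  obtain ⟨P, hP⟩ := hc.pbdd
  obtain ⟨P', hP'⟩ := hd.pbdd
  have hp : pushf φ (c + d) = pushf φ c + pushf φ d := by
    funext b
    exact finsum_mem_add_distrib' (hc.fin b) (hd.fin b)
  have he : ext (c + d) = ext c + ext d := by
    funext u; exact ext_add hM hM' u
  refine ⟨⟨M + M', fun a => (abs_add_le _ _).trans (add_le_add (hM a) (hM' a))⟩, fun b => ?_,
    ⟨P + P', fun b => ?_⟩, fun w => ?_, fun w => ?_⟩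
  · refine ((hc.fin b).union (hd.fin b)).subset ?_
    rw [← Set.inter_union_distrib_left]
    exact Set.inter_subset_inter_right _ (Function.support_add _ _)
  · rw [hp]
    exact (abs_add_le _ _).trans (add_le_add (hP b) (hP' b))
  · rw [he]
    refine ((hc.ufin w).union (hd.ufin w)).subset ?_
    rw [← Set.inter_union_distrib_left]
    exact Set.inter_subset_inter_right _ (Function.support_add _ _)
  · rw [hp, he, ext_add hP hP', ← hc.eq, ← hd.eq]
    exact finsum_mem_add_distrib' (hc.ufin w) (hd.ufin w)

lemma PG.zero {A B : Type*} {φ : A → B} : PG φ (0 : A → ℤ) := by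
  have hp : pushf φ (0 : A → ℤ) = 0 := by
    funext b; simp [pushf]
  have he : ext (0 : A → ℤ) = 0 := by
    funext u; exact ext_zero u
  refine ⟨⟨0, by simp⟩, by simp, ⟨0, by simp [hp]⟩, ?_, ?_⟩
  · simp [he]
  · intro w
    rw [hp, he, ext_zero]; simp

lemma PG.inj {A B : Type*} {φ : A → B} {c : A → ℤ} {M : ℤ} (hM0 : 0 ≤ M) (hM : ∀ a, |c a| ≤ M)
    (hi : Set.InjOn φ (support c)) : PG φ c := by
  have hpv : ∀ a ∈ support c, pushf φ c (φ a) = c a := by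
    intro a ha
    unfold pushf
    rw [← finsum_mem_inter_support]
    have : φ ⁻¹' {φ a} ∩ support c = {a} := by
      ext x
      constructor
      · rintro ⟨h1, h2⟩
        exact hi h2 ha h1
      · rintro rfl
        exact ⟨rfl, ha⟩
    rw [this, finsum_mem_singleton]
  have hp0 : ∀ b, b ∉ φ '' support c → pushf φ c b = 0 := by
    intro b hb
    unfold pushf
    apply finsum_mem_eq_zero_of_forall_eq_zero
    intro x hx
    by_contra h
    exact hb ⟨x, h, hx⟩
  have hpb : ∀ b, |pushf φ c b| ≤ M := by
    intro b
    by_cases hb : b ∈ φ '' support c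
    · obtain ⟨a, ha, rfl⟩ := hb
      rw [hpv a ha]; exact hM a
    · rw [hp0 b hb]
      simpa using hM0
  have hsup : ∀ u : Ultrafilter A, ext c u ≠ 0 → support c ∈ u := by
    intro u hu
    filter_upwards [ext_spec hM u] with a ha
    rw [mem_support, ha]; exact hu
  have hsub : ∀ w, ({u : Ultrafilter A | u.map φ = w} ∩ support (ext c)).Subsingleton := by
    rintro w u ⟨h1, h2⟩ u' ⟨h1', h2'⟩
    exact ultra_eq_of_injOn hi (hsup u h2) (hsup u' h2') (h1.trans h1'.symm)
  refine ⟨⟨M, hM⟩, fun b => ?_, ⟨M, hpb⟩, fun w => (hsub w).finite, fun w => ?_⟩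
  · apply Set.Subsingleton.finite
    rintro x ⟨h1, h2⟩ y ⟨h3, h4⟩
    exact hi h2 h4 (h1.trans h3.symm)
  · rw [← finsum_mem_inter_support]
    rcases (hsub w).eq_empty_or_singleton with h | ⟨u, hu⟩
    · rw [h, finsum_mem_empty]
      symm
      by_contra hne
      have hs : φ '' support c ∈ w := by
        filter_upwards [ext_spec hpb w] with b hb
        by_contra hb'
        exact hne (by rw [← hb, hp0 b hb'])
      have hnb : (Filter.comap φ (w : Filter B) ⊓ Filter.principal (support c)).NeBot := by
        rw [Filter.inf_principal_neBot_iff]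
        rintro U ⟨V, hV, hVU⟩
        obtain ⟨b, hb, a, ha, rfl⟩ := w.nonempty_of_mem (Filter.inter_mem hV hs)
        exact ⟨a, hVU hb, ha⟩
      let u := Ultrafilter.of (Filter.comap φ (w : Filter B) ⊓ Filter.principal (support c))
      have hu := Ultrafilter.of_le (Filter.comap φ (w : Filter B) ⊓ Filter.principal (support c))
      have huw : u.map φ = w := by
        apply Ultrafilter.eq_of_le
        rw [Ultrafilter.coe_map]
        exact (Filter.map_mono (hu.trans inf_le_left)).trans Filter.map_comap_le
      have hus : support c ∈ u := by
        have : (u : Filter A) ≤ Filter.principal (support c) := hu.trans inf_le_right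
        exact Filter.le_principal_iff.1 this
      have : u ∈ ({u : Ultrafilter A | u.map φ = w} ∩ support (ext c)) := by
        refine ⟨huw, ?_⟩
        obtain ⟨a, ha, hb⟩ := ((ext_spec hM u).and hus).exists
        rw [mem_support, ← ha]; exact hb
      rw [h] at this
      exact this
    · rw [hu, finsum_mem_singleton]
      have hm : u ∈ ({u : Ultrafilter A | u.map φ = w} ∩ support (ext c)) := by rw [hu]; rfl
      obtain ⟨h1, h2⟩ := hm
      symm
      apply ext_eq
      rw [← show u.map φ = w from h1, Ultrafilter.coe_map, Filter.eventually_map]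
      filter_upwards [ext_spec hM u, hsup u h2] with a ha hs
      rw [hpv a hs, ha]

lemma PG.color {A B K : Type*} [Finite K] {φ : A → B} {c : A → ℤ} {M : ℤ} (hM : ∀ a, |c a| ≤ M)
    (κ : A → K) (hi : ∀ a b, c a ≠ 0 → c b ≠ 0 → κ a = κ b → φ a = φ b → a = b) : PG φ c := by
  have := Fintype.ofFinite K
  have hM' : ∀ a, |c a| ≤ |M| := fun a => (hM a).trans (le_abs_self M)
  have hc : c = ∑ k : K, Set.indicator (κ ⁻¹' {k}) c := by
    funext a
    rw [Finset.sum_apply, Finset.sum_eq_single (κ a)]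
    · simp
    · intro b _ hb
      apply Set.indicator_of_notMem
      exact fun h => hb h.symm
    · simp
  rw [hc]
  apply Finset.sum_induction _ (PG φ) (fun _ _ => PG.add) PG.zero
  intro k _
  apply PG.inj (M := |M|) (abs_nonneg M)
  · intro a
    by_cases ha : a ∈ κ ⁻¹' {k}
    · rw [Set.indicator_of_mem ha]; exact hM' a
    · rw [Set.indicator_of_notMem ha]; simp
  · intro a ha b hb hab
    rw [Set.support_indicator] at ha hb
    exact hi a b ha.2 hb.2 (ha.1.trans hb.1.symm) hab

/-- quotient comparison -/
lemma quot_iso {A B : Type*} [AddCommGroup A] [AddCommGroup B] (Φ : A →+ B) (K cyc bd : AddSubgroup A)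
    (cyc' bd' : AddSubgroup B)
    (hK : Set.InjOn Φ K) (h1 : cyc ≤ K) (h2 : bd ≤ K) (h3 : cyc.map Φ = cyc')
    (h4 : bd.map Φ = bd') :
    Nonempty ((cyc ⧸ AddSubgroup.comap cyc.subtype bd) ≃+
      (cyc' ⧸ AddSubgroup.comap cyc'.subtype bd')) := by
  subst h3 h4
  let e : cyc ≃+ cyc.map Φ := AddEquiv.ofBijective (Φ.addSubgroupMap cyc) ⟨by
    intro a b hab
    apply Subtype.ext
    exact hK (h1 a.2) (h1 b.2) (congrArg Subtype.val hab), Φ.addSubgroupMap_surjective cyc⟩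
  refine ⟨QuotientAddGroup.congr _ _ e ?_⟩
  ext ⟨y, x, hx, rfl⟩
  constructor
  · rintro ⟨a, ha, hae⟩
    have := congrArg Subtype.val hae
    exact ⟨a, ha, this⟩
  · rintro ⟨a, ha, hae⟩
    refine ⟨⟨x, hx⟩, ?_, rfl⟩
    have : a = x := hK (h2 ha) (h1 hx) hae
    subst this
    exact ha

end Abstract

section Metric

variable (X : Type u) [MetricSpace X]

lemma exists_coloring {X : Type u} [MetricSpace X] (hbg : BoundedGeometry X) (R : ℝ) :
    ∃ N : ℕ, ∃ χ : X → Fin N, ∀ x y, dist x y ≤ R → χ x = χ y → x = y := by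
  obtain ⟨N, hN⟩ := hbg R
  have wf : WellFounded (WellOrderingRel : X → X → Prop) := WellOrderingRel.isWellOrder.wf
  let F : (x : X) → ((y : X) → WellOrderingRel y x → ℕ) → ℕ := fun x f =>
    sInf {k | ∀ y (h : WellOrderingRel y x), dist x y ≤ R → f y h ≠ k}
  let f : X → ℕ := wf.fix F
  have hf : ∀ x, f x = sInf {k | ∀ y, WellOrderingRel y x → dist x y ≤ R → f y ≠ k} := by
    intro x
    exact wf.fix_eq F x
  have hex : ∀ x, ∃ k ∈ {k | ∀ y, WellOrderingRel y x → dist x y ≤ R → f y ≠ k}, k < N + 1 := by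
    intro x
    obtain ⟨s, hs, hc⟩ := hN x
    have hlt : (s.image f).card < (Finset.range (N + 1)).card := by
      rw [Finset.card_range]
      exact lt_of_le_of_lt (Finset.card_image_le.trans hc) (Nat.lt_succ_self N)
    obtain ⟨k, hk, hk'⟩ := Finset.exists_mem_notMem_of_card_lt_card hlt
    refine ⟨k, ?_, Finset.mem_range.1 hk⟩
    intro y _ hd he
    apply hk'
    rw [Finset.mem_image]
    refine ⟨y, ?_, he⟩
    exact_mod_cast hs (by rw [Metric.mem_closedBall, dist_comm]; exact hd)
  have hlt : ∀ x, f x < N + 1 := by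
    intro x
    obtain ⟨k, hk, hk'⟩ := hex x
    rw [hf]
    exact lt_of_le_of_lt (Nat.sInf_le hk) hk'
  have hmem : ∀ x y, WellOrderingRel y x → dist x y ≤ R → f y ≠ f x := by
    intro x
    obtain ⟨k, hk, hk'⟩ := hex x
    have := Nat.sInf_mem ⟨k, hk⟩
    rw [← hf] at this
    exact this
  refine ⟨N + 1, fun x => ⟨f x, hlt x⟩, ?_⟩
  intro x y hd he
  have he' : f x = f y := congrArg Fin.val he
  rcases trichotomous_of (WellOrderingRel : X → X → Prop) x y with h | h | h
  · exact absurd he' (hmem y x h (by rwa [dist_comm]))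
  · exact h
  · exact absurd he'.symm (hmem x y h hd)

lemma discrete_of_bg {X : Type u} [MetricSpace X] (hbg : BoundedGeometry X) :
    DiscreteTopology X := by
  rw [discreteTopology_iff_isOpen_singleton]
  intro x
  obtain ⟨N, hN⟩ := hbg 1
  obtain ⟨s, hs, -⟩ := hN x
  have hfin : (Metric.ball x 1 \ {x}).Finite :=
    s.finite_toSet.subset (Set.sdiff_subset.trans (Metric.ball_subset_closedBall.trans hs))
  have : ({x} : Set X) = Metric.ball x 1 \ (Metric.ball x 1 \ {x}) := by
    ext y
    simp only [Set.mem_singleton_iff, Set.mem_sdiff]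
    constructor
    · rintro rfl; simp
    · rintro ⟨h1, h2⟩; by_contra h; exact h2 ⟨h1, h⟩
  rw [this]
  exact Metric.isOpen_ball.sdiff hfin.isClosed

/-- tuples of diameter at most r -/
def E (n : ℕ) (r : ℝ) : Set (Fin (n + 1) → X) := {v | ∀ i j, dist (v i) (v j) ≤ r}

lemma E_mono {n : ℕ} {r s : ℝ} (h : r ≤ s) : E X n r ⊆ E X n s :=
  fun _ hv i j => (hv i j).trans h

abbrev Pts (n : ℕ) : Type u := {u : Ultrafilter (Fin (n + 1) → X) // ∃ r, E X n r ∈ u}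

variable {X}

def ev {n : ℕ} (i : Fin (n + 1)) (u : Ultrafilter (Fin (n + 1) → X)) : Ultrafilter X :=
  u.map (fun v => v i)

lemma uniq (hbg : BoundedGeometry X) {n : ℕ} {u u' : Ultrafilter (Fin (n + 1) → X)} {r : ℝ}
    (h : E X n r ∈ u) (h' : E X n r ∈ u') (he : ∀ i, ev i u = ev i u') : u = u' := by
  obtain ⟨N, χ, hχ⟩ := exists_coloring hbg (r + r)
  choose k hk using fun i => ultra_color χ (ev i u)
  have hk' : ∀ i, ∀ᶠ v : Fin (n + 1) → X in u, χ (v i) = k i := fun i => hk i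
  have hk'' : ∀ i, ∀ᶠ v : Fin (n + 1) → X in u', χ (v i) = k i := fun i => by
    have := hk i
    rw [he i] at this
    exact this
  have hinj : Set.InjOn (fun v : Fin (n + 1) → X => v 0)
      (E X n r ∩ {v | ∀ i, χ (v i) = k i}) := by
    rintro v ⟨hv, hvk⟩ w ⟨hw, hwk⟩ hvw
    funext i
    apply hχ
    · calc dist (v i) (w i) ≤ dist (v i) (v 0) + dist (v 0) (w i) := dist_triangle _ _ _
        _ ≤ r + r := by
          refine add_le_add (hv i 0) ?_
          rw [show v 0 = w 0 from hvw]; exact hw 0 i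
    · rw [hvk, hwk]
  exact ultra_eq_of_injOn hinj (Filter.inter_mem h (Filter.eventually_all.2 hk'))
    (Filter.inter_mem h' (Filter.eventually_all.2 hk'')) (he 0)

lemma uniq' (hbg : BoundedGeometry X) {n : ℕ} {u u' : Pts X n}
    (he : ∀ i, ev i u.1 = ev i u'.1) : u = u' := by
  obtain ⟨u, r, hr⟩ := u
  obtain ⟨u', r', hr'⟩ := u'
  apply Subtype.ext
  exact uniq hbg (r := max r r') (Filter.mem_of_superset hr (E_mono X (le_max_left _ _)))
    (Filter.mem_of_superset hr' (E_mono X (le_max_right _ _))) he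

/-- bounded partial translations realise pairs -/
lemma exists_trans (hbg : BoundedGeometry X) {u : Ultrafilter (Fin 2 → X)} {r : ℝ} (hr : 0 ≤ r)
    (h : E X 1 r ∈ u) : ∃ t : X → X, (∀ x, dist x (t x) ≤ r) ∧ (ev 0 u).map t = ev 1 u := by
  obtain ⟨N, χ, hχ⟩ := exists_coloring hbg (r + r)
  obtain ⟨k, hk⟩ := ultra_color χ (ev 1 u)
  have hk' : ∀ᶠ v : Fin 2 → X in u, χ (v 1) = k := hk
  let t : X → X := fun x => if h : ∃ y, dist x y ≤ r ∧ χ y = k then h.choose else x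
  refine ⟨t, fun x => ?_, ?_⟩
  · by_cases hx : ∃ y, dist x y ≤ r ∧ χ y = k
    · simp only [t, dif_pos hx]; exact hx.choose_spec.1
    · simp only [t, dif_neg hx]; simpa using hr
  · have : ∀ᶠ v : Fin 2 → X in u, t (v 0) = v 1 := by
      filter_upwards [h, hk'] with v hv hvk
      have hx : ∃ y, dist (v 0) y ≤ r ∧ χ y = k := ⟨v 1, hv 0 1, hvk⟩
      simp only [t, dif_pos hx]
      apply hχ
      · refine (dist_triangle_left _ _ (v 0)).trans (add_le_add hx.choose_spec.1 (hv 0 1))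
      · rw [hx.choose_spec.2, hvk]
    apply Ultrafilter.coe_injective
    simp only [ev, Ultrafilter.coe_map, Filter.map_map]
    exact Filter.map_congr this

lemma exists_tuple (hbg : BoundedGeometry X) (n : ℕ) {r : ℝ} (hr : 0 ≤ r)
    (b : Fin (n + 1) → Ultrafilter X)
    (h : ∀ j : Fin n, ∃ u : Ultrafilter (Fin 2 → X), E X 1 r ∈ u ∧ ev 0 u = b j.castSucc ∧
      ev 1 u = b j.succ) :
    ∃ u : Ultrafilter (Fin (n + 1) → X), E X n (n * r + n * r) ∈ u ∧ ∀ i, ev i u = b i := by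
  have key : ∀ i : Fin (n + 1), ∃ T : X → X, (∀ x, dist x (T x) ≤ i * r) ∧ (b 0).map T = b i := by
    intro i
    induction i using Fin.induction with
    | zero => exact ⟨id, by simp, by apply Ultrafilter.coe_injective; simp⟩
    | succ j ih =>
      obtain ⟨T, hT, hb⟩ := ih
      obtain ⟨u, hu, h0, h1⟩ := h j
      obtain ⟨t, ht, hm⟩ := exists_trans hbg hr hu
      refine ⟨t ∘ T, fun x => ?_, ?_⟩
      · refine (dist_triangle _ (T x) _).trans ((add_le_add (hT x) (ht _)).trans (le_of_eq ?_))
        simp; ring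
      · rw [← Ultrafilter.map_map, hb, ← h0, hm, h1]
  choose T hT hb using key
  refine ⟨(b 0).map (fun x i => T i x), ?_, fun i => ?_⟩
  · rw [Ultrafilter.mem_map]
    filter_upwards with x i j
    have hle : ∀ i : Fin (n + 1), (i : ℝ) * r ≤ n * r := fun i => by
      gcongr
      exact_mod_cast Nat.lt_succ_iff.1 i.2
    exact (dist_triangle_left _ _ x).trans (add_le_add ((hT i x).trans (hle i))
      ((hT j x).trans (hle j)))
  · rw [← hb i]; rfl

lemma continuous_map {A B : Type*} (f : A → B) :
    Continuous (fun u : Ultrafilter A => u.map f) := by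
  apply continuous_generateFrom_iff.2
  rintro _ ⟨s, rfl⟩
  exact ultrafilter_isOpen_basic (f ⁻¹' s)

/-! faces and uniformly finite chains -/

def delta {n : ℕ} (i : Fin (n + 2)) (v : Fin (n + 2) → X) : Fin (n + 1) → X :=
  fun j => v (i.succAbove j)

lemma pg_delta (hbg : BoundedGeometry X) {n : ℕ} (i : Fin (n + 2)) {c : (Fin (n + 2) → X) → ℤ}
    (hc : c ∈ ufChains X (n + 1)) : PG (delta i) c := by
  obtain ⟨⟨M, hM⟩, r, hr⟩ := hc
  obtain ⟨N, χ, hχ⟩ := exists_coloring hbg (r + r)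
  apply PG.color hM (fun v i => χ (v i))
  intro v w hv hw hk hd
  funext j
  apply hχ
  · have h0 : v (i.succAbove 0) = w (i.succAbove 0) := congrFun hd 0
    refine (dist_triangle _ (v (i.succAbove 0)) _).trans (add_le_add (hr v hv _ _) ?_)
    rw [h0]; exact hr w hw _ _
  · exact congrFun hk j

lemma pushf_mem (hbg : BoundedGeometry X) {n : ℕ} (i : Fin (n + 2)) {c : (Fin (n + 2) → X) → ℤ}
    (hc : c ∈ ufChains X (n + 1)) : pushf (delta i) c ∈ ufChains X n := by
  refine ⟨(pg_delta hbg i hc).pbdd, ?_⟩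
  obtain ⟨-, r, hr⟩ := hc
  refine ⟨r, fun v hv => ?_⟩
  obtain ⟨w, hw, hw'⟩ := exists_ne_zero_of_finsum_mem_ne_zero hv
  intro j k
  have := hr w hw' (i.succAbove j) (i.succAbove k)
  rw [← show delta i w = v from hw]
  exact this

lemma ufBdry_eq {X : Type u} {n : ℕ} (c : (Fin (n + 2) → X) → ℤ) :
    ufBdry X n c = ∑ i : Fin (n + 2), (-1 : ℤ) ^ (i : ℕ) • pushf (delta i) c := by
  funext y
  simp only [ufBdry, Finset.sum_apply, Pi.smul_apply, smul_eq_mul]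
  rfl

lemma ufBdry_mem (hbg : BoundedGeometry X) {n : ℕ} {c : (Fin (n + 2) → X) → ℤ}
    (hc : c ∈ ufChains X (n + 1)) : ufBdry X n c ∈ ufChains X n := by
  rw [ufBdry_eq]
  exact AddSubgroup.sum_mem _ fun i _ => AddSubgroup.zsmul_mem _ (pushf_mem hbg i hc) _

lemma ext_ufBdry (hbg : BoundedGeometry X) {n : ℕ} {c : (Fin (n + 2) → X) → ℤ}
    (hc : c ∈ ufChains X (n + 1)) (w : Ultrafilter (Fin (n + 1) → X)) :
    ext (ufBdry X n c) w = ∑ i : Fin (n + 2), (-1 : ℤ) ^ (i : ℕ) *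
      ∑ᶠ u ∈ {u : Ultrafilter (Fin (n + 2) → X) | u.map (delta i) = w}, ext c u := by
  apply ext_eq
  have : ∀ i, ∀ᶠ v in w, pushf (delta i) c v = ext (pushf (delta i) c) w := fun i => by
    obtain ⟨M, hM⟩ := (pg_delta hbg i hc).pbdd
    exact ext_spec hM w
  filter_upwards [Filter.eventually_all.2 this] with v hv
  rw [ufBdry_eq]
  simp only [Finset.sum_apply, Pi.smul_apply, smul_eq_mul]
  refine Finset.sum_congr rfl fun i _ => ?_
  rw [hv i]
  congr 1
  exact ((pg_delta hbg i hc).eq w).symm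

/-! the compact open description of chains -/

def pt {n : ℕ} (v : Fin (n + 1) → X) : Pts X n :=
  ⟨pure v, ∑ i, ∑ j, dist (v i) (v j), by
    rw [Ultrafilter.mem_pure]
    intro i j
    refine le_trans ?_ (Finset.single_le_sum (f := fun i => ∑ j, dist (v i) (v j))
      (fun i _ => Finset.sum_nonneg fun j _ => dist_nonneg) (Finset.mem_univ i))
    exact Finset.single_le_sum (f := fun j => dist (v i) (v j))
      (fun j _ => dist_nonneg) (Finset.mem_univ j)⟩

lemma isOpen_basic {n : ℕ} (A : Set (Fin (n + 1) → X)) : IsOpen {u : Pts X n | A ∈ u.1} :=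
  (ultrafilter_isOpen_basic A).preimage continuous_subtype_val

lemma isCompact_basic {n : ℕ} (r : ℝ) : IsCompact {u : Pts X n | E X n r ∈ u.1} := by
  rw [Subtype.isCompact_iff]
  convert (ultrafilter_isClosed_basic (E X n r)).isCompact
  ext u
  constructor
  · rintro ⟨u, hu, rfl⟩; exact hu
  · intro hu; exact ⟨⟨u, r, hu⟩, hu, rfl⟩

lemma res_mem {n : ℕ} {f : Pts X n → ℤ} (hf : f ∈ ccZ (Pts X n)) :
    (fun v => f (pt v)) ∈ ufChains X n := by
  obtain ⟨hc, hs⟩ := hf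
  constructor
  · have hfin : (Set.range f).Finite := (hs.isCompact_range hc).finite_of_discrete
    obtain ⟨M, hM⟩ := (hfin.image (fun x : ℤ => |x|)).bddAbove
    exact ⟨M, fun v => hM ⟨_, ⟨_, rfl⟩, rfl⟩⟩
  · obtain ⟨r, hr⟩ := hs.isCompact.elim_directed_cover (fun r : ℝ => {u : Pts X n | E X n r ∈ u.1})
      (fun r => isOpen_basic _) (fun u _ => by
        obtain ⟨r, hr⟩ := u.2
        exact Set.mem_iUnion.2 ⟨r, hr⟩) (by
        intro r s
        refine ⟨max r s, fun u hu => ?_, fun u hu => ?_⟩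
        · exact Filter.mem_of_superset hu (E_mono X (le_max_left _ _))
        · exact Filter.mem_of_superset hu (E_mono X (le_max_right _ _)))
    refine ⟨r, fun v hv => ?_⟩
    have : E X n r ∈ (pure v : Ultrafilter _) := hr (subset_tsupport f hv)
    exact this

lemma ext_mem {n : ℕ} {c : (Fin (n + 1) → X) → ℤ} (hc : c ∈ ufChains X n) :
    (fun u : Pts X n => ext c u.1) ∈ ccZ (Pts X n) := by
  obtain ⟨⟨M, hM⟩, r, hr⟩ := hc
  constructor
  · apply IsLocallyConstant.continuous
    rw [IsLocallyConstant.iff_eventually_eq]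
    intro u
    filter_upwards [(isOpen_basic {v | c v = ext c u.1}).mem_nhds (ext_spec hM u.1)] with u' hu'
    exact ext_eq hu'
  · apply HasCompactSupport.intro (isCompact_basic r)
    intro u hu
    by_contra hne
    apply hu
    change E X n r ∈ u.1
    filter_upwards [ext_spec hM u.1] with v hv
    exact hr v (by rw [hv]; exact hne)

lemma ext_res {n : ℕ} {f : Pts X n → ℤ} (hf : f ∈ ccZ (Pts X n)) (u : Pts X n) :
    ext (fun v => f (pt v)) u.1 = f u := by
  apply ext_eq
  have ho : IsOpen (f ⁻¹' {f u}) := (isOpen_discrete _).preimage hf.1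
  obtain ⟨W, hW, hWe⟩ := isOpen_induced_iff.1 ho
  have huW : u.1 ∈ W := by
    have : u ∈ Subtype.val ⁻¹' W := by rw [hWe]; rfl
    exact this
  obtain ⟨_, ⟨A, rfl⟩, hA, hAW⟩ := ultrafilterBasis_is_basis.exists_subset_of_mem_open huW hW
  filter_upwards [show A ∈ u.1 from hA] with v hv
  have : pt v ∈ Subtype.val ⁻¹' W := hAW (show A ∈ (pure v : Ultrafilter _) from hv)
  rw [hWe] at this
  exact this

end Metric

section Homeo

lemma homeo_of {P Z : Type*} [TopologicalSpace P] [TopologicalSpace Z] [T2Space Z] (θ : P → Z)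
    (hc : Continuous θ) (hb : Function.Bijective θ)
    (h : ∀ z, ∃ V, IsOpen V ∧ z ∈ V ∧ ∃ C : Set P, IsCompact C ∧ V ⊆ θ '' C) :
    IsHomeomorph θ := by
  refine ⟨hc, ?_, hb⟩
  intro W hW
  rw [isOpen_iff_mem_nhds]
  rintro _ ⟨p, hp, rfl⟩
  obtain ⟨V, hV, hpV, C, hC, hVC⟩ := h (θ p)
  have hcl : IsClosed (θ '' (C \ W)) := ((hC.diff hW).image hc).isClosed
  refine Filter.mem_of_superset ((hV.sdiff hcl).mem_nhds ⟨hpV, ?_⟩) ?_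
  · rintro ⟨q, hq, hqp⟩
    exact hq.2 (hb.1 hqp ▸ hp)
  · rintro z ⟨hz, hz'⟩
    obtain ⟨q, hq, rfl⟩ := hVC hz
    refine ⟨q, ?_, rfl⟩
    by_contra hqW
    exact hz' ⟨q, ⟨hq, hqW⟩, rfl⟩

lemma ccZ_iff {P Z : Type*} [TopologicalSpace P] [TopologicalSpace Z] {θ : P → Z}
    (h : IsHomeomorph θ) (f : Z → ℤ) : f ∈ ccZ Z ↔ f ∘ θ ∈ ccZ P := by
  obtain ⟨e, rfl⟩ := isHomeomorph_iff_exists_homeomorph.1 h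
  constructor
  · rintro ⟨h1, h2⟩
    exact ⟨h1.comp e.continuous, h2.comp_homeomorph e⟩
  · rintro ⟨h1, h2⟩
    have : f = (f ∘ e) ∘ e.symm := by funext z; simp
    rw [this]
    exact ⟨h1.comp e.symm.continuous, h2.comp_homeomorph e.symm⟩

end Homeo

section Gpd

variable {X : Type u} [MetricSpace X] (hbg : BoundedGeometry X)

def H : Ultrafilter X ≃ₜ StoneCech X :=
  haveI := discrete_of_bg hbg
  have hp : Continuous (pure : X → Ultrafilter X) := continuous_of_discreteTopology
  have h1 : Continuous (Ultrafilter.extend (stoneCechUnit : X → StoneCech X)) :=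
    continuous_ultrafilter_extend _
  have h2 : Continuous (stoneCechExtend hp) := continuous_stoneCechExtend hp
  { toFun := Ultrafilter.extend stoneCechUnit
    invFun := stoneCechExtend hp
    left_inv := by
      apply congrFun (f := stoneCechExtend hp ∘ Ultrafilter.extend stoneCechUnit) (g := id)
      apply denseRange_pure.equalizer (h2.comp h1) continuous_id
      funext x
      have := congrFun (ultrafilter_extend_extends (stoneCechUnit : X → StoneCech X)) x
      simp only [Function.comp_apply] at this ⊢
      rw [this]
      exact stoneCechExtend_stoneCechUnit hp x
    right_inv := by
      apply congrFun (f := Ultrafilter.extend stoneCechUnit ∘ stoneCechExtend hp) (g := id)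
      apply denseRange_stoneCechUnit.equalizer (h1.comp h2) continuous_id
      funext x
      have := congrFun (ultrafilter_extend_extends (stoneCechUnit : X → StoneCech X)) x
      simp only [Function.comp_apply] at this ⊢
      rw [stoneCechExtend_stoneCechUnit hp x]
      exact this
    continuous_toFun := h1
    continuous_invFun := h2 }

lemma H_pure (x : X) : H hbg (pure x) = stoneCechUnit x :=
  congrFun (ultrafilter_extend_extends (stoneCechUnit : X → StoneCech X)) x

/-- pair of coordinates -/
def pr (u : Ultrafilter (Fin 2 → X)) : StoneCech X × StoneCech X :=
  (H hbg (ev 0 u), H hbg (ev 1 u))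

lemma continuous_pr : Continuous (pr hbg) :=
  ((H hbg).continuous.comp (continuous_map _)).prodMk ((H hbg).continuous.comp (continuous_map _))

lemma pr_pure (v : Fin 2 → X) : pr hbg (pure v) = (stoneCechUnit (v 0), stoneCechUnit (v 1)) := by
  rw [← H_pure hbg, ← H_pure hbg]; rfl

lemma closure_char (A : Set (Fin 2 → X)) :
    closure {p : StoneCech X × StoneCech X | ∃ v ∈ A, p = (stoneCechUnit (v 0), stoneCechUnit (v 1))}
      = pr hbg '' {u | A ∈ u} := by
  apply Set.Subset.antisymm
  · apply closure_minimal
    · rintro _ ⟨v, hv, rfl⟩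
      exact ⟨pure v, hv, pr_pure hbg v⟩
    · exact ((ultrafilter_isClosed_basic A).isCompact.image (continuous_pr hbg)).isClosed
  · rintro _ ⟨u, hu, rfl⟩
    have h1 : u ∈ closure (pure '' A : Set (Ultrafilter (Fin 2 → X))) := by
      rw [ultrafilterBasis_is_basis.mem_closure_iff]
      rintro _ ⟨B, rfl⟩ hB
      obtain ⟨v, hvA, hvB⟩ := u.nonempty_of_mem (Filter.inter_mem hu hB)
      exact ⟨pure v, hvB, v, hvA, rfl⟩
    have h2 := image_closure_subset_closure_image (continuous_pr hbg) ⟨u, h1, rfl⟩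
    refine closure_mono ?_ h2
    rintro _ ⟨_, ⟨v, hv, rfl⟩, rfl⟩
    exact ⟨v, hv, pr_pure hbg v⟩

lemma ent_char {r : ℝ} (hr : 0 ≤ r) : Ent X r = pr hbg '' {u | E X 1 r ∈ u} := by
  rw [← closure_char, Ent]
  congr 1
  ext p
  constructor
  · rintro ⟨x, y, hd, rfl⟩
    refine ⟨![x, y], ?_, rfl⟩
    intro i j
    fin_cases i <;> fin_cases j <;> simp [hr, hd, dist_comm y x]
  · rintro ⟨v, hv, rfl⟩
    exact ⟨v 0, v 1, hv 0 1, rfl⟩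

lemma Ent_mono {r s : ℝ} (h : r ≤ s) : Ent X r ⊆ Ent X s := by
  apply closure_mono
  rintro _ ⟨x, y, hd, rfl⟩
  exact ⟨x, y, hd.trans h, rfl⟩

lemma pr_mem_Ent {n : ℕ} {u : Ultrafilter (Fin (n + 1) → X)} {r : ℝ} (hr : 0 ≤ r)
    (h : E X n r ∈ u) (i j : Fin (n + 1)) : (H hbg (ev i u), H hbg (ev j u)) ∈ Ent X r := by
  rw [ent_char hbg hr]
  have e0 : ev (n := 1) 0 (u.map (fun v => ![v i, v j])) = ev i u := rfl
  have e1 : ev (n := 1) 1 (u.map (fun v => ![v i, v j])) = ev j u := rfl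
  refine ⟨u.map (fun v => ![v i, v j]), ?_, by rw [pr, e0, e1]⟩
  simp only [Set.mem_ofPred_eq, Ultrafilter.mem_map]
  filter_upwards [h] with v hv
  have h0 : ∀ x : X, dist x x ≤ r := fun x => by rw [dist_self]; exact hr
  exact Fin.forall_fin_two.2 ⟨Fin.forall_fin_two.2 ⟨h0 _, hv i j⟩,
    Fin.forall_fin_two.2 ⟨hv j i, h0 _⟩⟩

def arrow {n : ℕ} (i j : Fin (n + 1)) (u : Pts X n) : CoarseGpd X :=
  ⟨(H hbg (ev i u.1), H hbg (ev j u.1)), by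
    obtain ⟨r, hr⟩ := u.2
    exact ⟨max r 1, lt_max_of_lt_right one_pos, pr_mem_Ent hbg (le_max_of_le_right zero_le_one)
      (Filter.mem_of_superset hr (E_mono X (le_max_left _ _))) i j⟩⟩

attribute [local instance] coarseTop

lemma continuous_val : Continuous (fun p : CoarseGpd X => p.1) := by
  apply continuous_iSup_dom.2
  intro r
  apply continuous_coinduced_dom.2
  exact continuous_subtype_val

def incl {r : ℝ} (hr : 0 < r) (q : ↥(Ent X r)) : CoarseGpd X := ⟨q.1, r, hr, q.2⟩

lemma continuous_incl {r : ℝ} (hr : 0 < r) : Continuous (incl (X := X) hr) := by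
  apply continuous_iSup_rng (i := (⟨r, hr⟩ : {r : ℝ // 0 < r}))
  exact continuous_coinduced_rng

instance t2G : T2Space (CoarseGpd X) :=
  T2Space.of_injective_continuous Subtype.val_injective continuous_val

lemma continuous_arrow {n : ℕ} (i j : Fin (n + 1)) : Continuous (arrow (n := n) hbg i j) := by
  rw [continuous_iff_continuousAt]
  rintro u
  obtain ⟨r, hr⟩ := u.2
  have hpos : 0 < max r 1 := lt_max_of_lt_right one_pos
  have hr' : E X n (max r 1) ∈ u.1 := Filter.mem_of_superset hr (E_mono X (le_max_left _ _))
  have hS := isOpen_basic (E X n (max r 1))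
  refine ContinuousOn.continuousAt (s := {u : Pts X n | E X n (max r 1) ∈ u.1}) ?_
    (hS.mem_nhds hr')
  rw [continuousOn_iff_continuous_domRestrict]
  have h1 : Continuous (fun q : {u : Pts X n | E X n (max r 1) ∈ u.1} =>
      (⟨(H hbg (ev i q.1.1), H hbg (ev j q.1.1)), pr_mem_Ent hbg hpos.le q.2 i j⟩ :
        ↥(Ent X (max r 1)))) := by
    apply Continuous.subtype_mk
    have hv : Continuous (fun q : {u : Pts X n | E X n (max r 1) ∈ u.1} => q.1.1) :=
      continuous_subtype_val.comp continuous_subtype_val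
    exact ((H hbg).continuous.comp ((continuous_map _).comp hv)).prodMk
      ((H hbg).continuous.comp ((continuous_map _).comp hv))
  exact (continuous_incl hpos).comp h1

lemma isOpen_Ent (hbg : BoundedGeometry X) {r : ℝ} (hr : 0 < r) : IsOpen {p : CoarseGpd X | p.1 ∈ Ent X r} := by
  apply isOpen_iSup_iff.2
  rintro ⟨t, ht⟩
  apply isOpen_coinduced.2
  rw [← isClosed_compl_iff]
  have hcl : IsClosed (pr hbg '' {u | E X 1 t \ E X 1 r ∈ u}) := by
    rw [← closure_char]; exact isClosed_closure
  convert hcl.preimage (continuous_subtype_val (p := fun q => q ∈ Ent X t)) using 1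
  ext ⟨q, hq⟩
  change q ∉ Ent X r ↔ q ∈ pr hbg '' _
  rw [ent_char hbg hr.le]
  constructor
  · intro h
    rw [ent_char hbg ht.le] at hq
    obtain ⟨u, hu, rfl⟩ := hq
    refine ⟨u, ?_, rfl⟩
    have : E X 1 r ∉ u := fun h' => h ⟨u, h', rfl⟩
    exact Filter.inter_mem hu (Ultrafilter.compl_mem_iff_notMem.2 this)
  · rintro ⟨u, hu, rfl⟩ ⟨u', hu', he⟩
    have : u' = u := by
      apply uniq hbg (r := max r t) (Filter.mem_of_superset hu' (E_mono X (le_max_left _ _)))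
        (Filter.mem_of_superset hu (Set.sdiff_subset.trans (E_mono X (le_max_right _ _))))
      intro i
      have h0 := (H hbg).injective (congrArg Prod.fst he)
      have h1 := (H hbg).injective (congrArg Prod.snd he)
      fin_cases i
      · exact h0
      · exact h1
    subst this
    obtain ⟨v, hv, hv'⟩ := u'.nonempty_of_mem (Filter.inter_mem hu' hu)
    exact hv'.2 hv

lemma arrow_inj {n m : ℕ} {i j : Fin (n + 1)} {k l : Fin (m + 1)} {u : Pts X n} {w : Pts X m} :
    arrow hbg i j u = arrow hbg k l w ↔ ev i u.1 = ev k w.1 ∧ ev j u.1 = ev l w.1 := by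
  constructor
  · intro h
    have h' := congrArg Subtype.val h
    exact ⟨(H hbg).injective (congrArg Prod.fst h'), (H hbg).injective (congrArg Prod.snd h')⟩
  · rintro ⟨h1, h2⟩
    apply Subtype.ext
    exact Prod.ext (congrArg (H hbg) h1) (congrArg (H hbg) h2)

def theta0 (u : Pts X 0) : ↥((coarseData X).unitSpace) := ⟨arrow hbg 0 0 u, rfl⟩

def theta1 {n : ℕ} (u : Pts X (n + 1)) : ↥((coarseData X).Comps (n + 1)) :=
  ⟨fun j => arrow hbg j.castSucc j.succ u, by
    intro j h
    rfl⟩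

lemma E0_mem (u : Ultrafilter (Fin 1 → X)) : E X 0 0 ∈ u := by
  filter_upwards with v i j
  rw [show i = j from Subsingleton.elim (α := Fin 1) i j, dist_self]

lemma theta0_surj : Function.Surjective (theta0 hbg) := by
  rintro ⟨⟨⟨b, b'⟩, hb⟩, h⟩
  obtain rfl : b = b' := h
  refine ⟨⟨((H hbg).symm b).map (fun x _ => x), 0, E0_mem _⟩, ?_⟩
  apply Subtype.ext
  apply Subtype.ext
  have : H hbg (ev (n := 0) 0 (((H hbg).symm b).map (fun x _ => x))) = b := by
    conv_rhs => rw [← (H hbg).apply_symm_apply b]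
    rfl
  exact Prod.ext this this

lemma homeo0 : IsHomeomorph (theta0 hbg) := by
  apply homeo_of
  · exact (continuous_arrow hbg 0 0).subtype_mk _
  · refine ⟨?_, theta0_surj hbg⟩
    intro u w h
    apply uniq' hbg
    intro i
    rw [show i = 0 from Subsingleton.elim (α := Fin 1) i 0]
    exact ((arrow_inj hbg).1 (congrArg Subtype.val h)).1
  · intro z
    refine ⟨Set.univ, isOpen_univ, trivial, {u | E X 0 0 ∈ u.1}, isCompact_basic _, ?_⟩
    rintro x -
    obtain ⟨u, hu⟩ := theta0_surj hbg x
    exact ⟨u, E0_mem _, hu⟩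

lemma exists_lift {n : ℕ} {r : ℝ} (hr : 0 < r) (v : ↥((coarseData X).Comps (n + 1)))
    (hv : ∀ j, (v.1 j).1 ∈ Ent X r) :
    ∃ u : Pts X (n + 1), E X (n + 1) ((n + 1 : ℕ) * r + (n + 1 : ℕ) * r) ∈ u.1 ∧
      theta1 hbg u = v := by
  let b : Fin (n + 2) → Ultrafilter X :=
    Fin.cases ((H hbg).symm (v.1 0).1.1) (fun j => (H hbg).symm (v.1 j).1.2)
  have hb2 : ∀ j : Fin (n + 1), b j.succ = (H hbg).symm (v.1 j).1.2 := fun j => rfl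
  have hb1 : ∀ j : Fin (n + 1), b j.castSucc = (H hbg).symm (v.1 j).1.1 := by
    intro j
    induction j using Fin.cases with
    | zero => rfl
    | succ j =>
      have := v.2 j.castSucc (by simp)
      have h' := congrArg (fun p => p.1.1) this
      change (H hbg).symm (v.1 j.castSucc).1.2 = _
      congr 1
  obtain ⟨u, hu, he⟩ := exists_tuple hbg (n + 1) hr.le b (by
    intro j
    have := hv j
    rw [ent_char hbg hr.le] at this
    obtain ⟨w, hw, hwe⟩ := this
    refine ⟨w, hw, ?_, ?_⟩
    · rw [hb1, ← hwe]; simp [pr]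
    · rw [hb2, ← hwe]; simp [pr])
  refine ⟨⟨u, _, hu⟩, hu, ?_⟩
  apply Subtype.ext
  funext j
  apply Subtype.ext
  apply Prod.ext
  · change H hbg (ev _ u) = _
    rw [he, hb1]; simp
  · change H hbg (ev _ u) = _
    rw [he, hb2]; simp

lemma homeo1 (n : ℕ) : IsHomeomorph (theta1 (n := n) hbg) := by
  have hall : ∀ v : ↥((coarseData X).Comps (n + 1)), ∃ r : ℝ, 0 < r ∧
      ∀ j, (v.1 j).1 ∈ Ent X r := by
    intro v
    choose r hr hrv using fun j => (v.1 j).2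
    refine ⟨∑ j, r j, Finset.sum_pos (fun j _ => hr j) ⟨0, Finset.mem_univ _⟩, fun j => ?_⟩
    exact Ent_mono (Finset.single_le_sum (fun j _ => (hr j).le) (Finset.mem_univ j)) (hrv j)
  apply homeo_of
  · exact (continuous_pi fun j => continuous_arrow hbg _ _).subtype_mk _
  · constructor
    · intro u w h
      have h' : ∀ j : Fin (n + 1), _ := fun j =>
        (arrow_inj hbg).1 (congrFun (congrArg Subtype.val h) j)
      apply uniq' hbg
      intro i
      induction i using Fin.cases with
      | zero => exact (h' 0).1
      | succ j => exact (h' j).2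
    · intro v
      obtain ⟨r, hr, hv⟩ := hall v
      obtain ⟨u, -, hu⟩ := exists_lift hbg hr v hv
      exact ⟨u, hu⟩
  · intro v
    obtain ⟨r, hr, hv⟩ := hall v
    refine ⟨{v | ∀ j, (v.1 j).1 ∈ Ent X r}, ?_, hv, _,
      isCompact_basic ((n + 1 : ℕ) * r + (n + 1 : ℕ) * r), fun w hw => exists_lift hbg hr w hw⟩
    rw [Set.ofPred_forall]
    apply isOpen_iInter_of_finite
    intro j
    have hcj : Continuous (fun v : ↥((coarseData X).Comps (n + 1)) => v.1 j) :=
      (continuous_apply j).comp continuous_subtype_val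
    exact (isOpen_Ent hbg hr).preimage hcj

def face {n : ℕ} (i : Fin (n + 2)) (u : Pts X (n + 1)) : Pts X n :=
  ⟨u.1.map (delta i), by
    obtain ⟨r, hr⟩ := u.2
    refine ⟨r, ?_⟩
    rw [Ultrafilter.mem_map]
    filter_upwards [hr] with v hv j k
    exact hv _ _⟩

lemma mul_arrow {n : ℕ} (i j k : Fin (n + 1)) (u : Pts X n) :
    (coarseData X).mul (arrow hbg i j u) (arrow hbg j k u) = arrow hbg i k u := by
  have h := (arrow hbg i k u).2
  exact dif_pos h

lemma dface_theta {n : ℕ} (i : Fin (n + 3)) (u : Pts X (n + 2)) :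
    (coarseData X).dface (n + 1) i (theta1 hbg u).1 = (theta1 hbg (face i u)).1 := by
  funext j
  have hR : (theta1 hbg (face i u)).1 j =
    arrow hbg (i.succAbove j.castSucc) (i.succAbove j.succ) u := rfl
  rw [hR, GroupoidData.dface]
  split_ifs with h1 h2
  · have e1 : i.succAbove j.castSucc = j.castSucc.castSucc := by
      rw [Fin.succAbove_of_castSucc_lt]; rw [Fin.lt_def]; simp; omega
    have e2 : i.succAbove j.succ = j.castSucc.succ := by
      rw [Fin.succAbove_of_castSucc_lt]
      · rfl
      · rw [Fin.lt_def]; simp; omega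
    rw [e1, e2]; rfl
  · have e1 : i.succAbove j.castSucc = j.castSucc.castSucc := by
      rw [Fin.succAbove_of_castSucc_lt]; rw [Fin.lt_def]; simp; omega
    have e2 : i.succAbove j.succ = j.succ.succ := by
      rw [Fin.succAbove_of_le_castSucc]; rw [Fin.le_def]; simp; omega
    rw [e1, e2]
    exact mul_arrow hbg _ _ _ u
  · have e1 : i.succAbove j.castSucc = j.succ.castSucc := by
      rw [Fin.succAbove_of_le_castSucc]
      · rfl
      · rw [Fin.le_def]; simp; omega
    have e2 : i.succAbove j.succ = j.succ.succ := by
      rw [Fin.succAbove_of_le_castSucc]; rw [Fin.le_def]; simp; omega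
    rw [e1, e2]; rfl

lemma finsum_transport {P Z : Type*} {θ : P → Z} (h : Function.Bijective θ) (a : Z → ℤ)
    (S : Set P) (T : Set Z) (hST : ∀ u, u ∈ S ↔ θ u ∈ T) :
    ∑ᶠ x ∈ T, a x = ∑ᶠ u ∈ S, a (θ u) := by
  symm
  apply finsum_mem_eq_of_bijOn θ
  · refine ⟨fun u hu => (hST u).1 hu, h.1.injOn, fun x hx => ?_⟩
    obtain ⟨u, rfl⟩ := h.2 x
    exact ⟨u, (hST u).2 hx, rfl⟩
  · intro _ _; rfl

/-- the unified parametrisation of the nerve -/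
def theta : (n : ℕ) → Pts X n → (coarseData X).MSp n
  | 0 => theta0 hbg
  | (n + 1) => theta1 (n := n) hbg

lemma theta_bij : (n : ℕ) → Function.Bijective (theta hbg n)
  | 0 => (homeo0 hbg).bijective
  | (n + 1) => (homeo1 hbg n).bijective

lemma theta_cc : (n : ℕ) → (f : (coarseData X).MSp n → ℤ) →
    (f ∈ ccZ ((coarseData X).MSp n) ↔ f ∘ theta hbg n ∈ ccZ (Pts X n))
  | 0, f => ccZ_iff (homeo0 hbg) f
  | (n + 1), f => ccZ_iff (homeo1 hbg n) f

lemma theta_bdry : (n : ℕ) → (a : (coarseData X).MSp (n + 1) → ℤ) → (w : Pts X n) →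
    (coarseData X).mBdry n a (theta hbg n w) = ∑ i : Fin (n + 2), (-1 : ℤ) ^ (i : ℕ) *
      ∑ᶠ u ∈ {u : Pts X (n + 1) | face i u = w}, a (theta hbg (n + 1) u)
  | 0, a, w => by
    rw [Fin.sum_univ_two]
    have h0 := finsum_transport (homeo1 hbg 0).bijective a {u : Pts X 1 | face 0 u = w}
      {x : ↥((coarseData X).Comps 1) | (coarseData X).source (x.1 0) = (theta0 hbg w).1} (by
        intro u
        rw [Set.mem_ofPred_eq, ← (homeo0 hbg).bijective.1.eq_iff, Subtype.ext_iff]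
        rfl)
    have h1 := finsum_transport (homeo1 hbg 0).bijective a {u : Pts X 1 | face 1 u = w}
      {x : ↥((coarseData X).Comps 1) | (coarseData X).range (x.1 0) = (theta0 hbg w).1} (by
        intro u
        rw [Set.mem_ofPred_eq, ← (homeo0 hbg).bijective.1.eq_iff, Subtype.ext_iff]
        rfl)
    have := congrArg₂ (fun x y : ℤ => x - y) h0 h1
    refine Eq.trans this ?_
    simp only [Fin.val_zero, Fin.val_one, pow_zero, pow_one, one_mul, neg_mul, ← sub_eq_add_neg]
    rfl
  | (n + 1), a, w => by
    refine Finset.sum_congr rfl fun i _ => ?_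
    congr 1
    refine finsum_transport (homeo1 hbg (n + 1)).bijective a {u : Pts X (n + 2) | face i u = w}
      {x : ↥((coarseData X).Comps (n + 2)) |
        (coarseData X).dface (n + 1) i x.1 = (theta1 hbg w).1} ?_
    intro u
    rw [Set.mem_ofPred_eq, Set.mem_ofPred_eq, dface_theta, ← Subtype.ext_iff,
      (homeo1 hbg n).bijective.1.eq_iff]

/-- restriction of functions to the dense subset of tuples in `X` -/
def Phi (n : ℕ) : ((coarseData X).MSp n → ℤ) →+ ((Fin (n + 1) → X) → ℤ) where
  toFun f := fun v => f (theta hbg n (pt v))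
  map_zero' := rfl
  map_add' _ _ := rfl

lemma Phi_mem {n : ℕ} {f : (coarseData X).MSp n → ℤ} (hf : f ∈ ccZ ((coarseData X).MSp n)) :
    Phi hbg n f ∈ ufChains X n := res_mem ((theta_cc hbg n f).1 hf)

lemma ext_Phi {n : ℕ} {f : (coarseData X).MSp n → ℤ} (hf : f ∈ ccZ ((coarseData X).MSp n))
    (u : Pts X n) : ext (Phi hbg n f) u.1 = f (theta hbg n u) :=
  ext_res ((theta_cc hbg n f).1 hf) u

lemma Phi_inj (n : ℕ) : Set.InjOn (Phi hbg n) (ccZSub ((coarseData X).MSp n)) := by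
  intro f hf g hg h
  funext x
  obtain ⟨u, rfl⟩ := (theta_bij hbg n).2 x
  rw [← ext_Phi hbg hf, ← ext_Phi hbg hg, h]

lemma exists_of_uf {n : ℕ} {c : (Fin (n + 1) → X) → ℤ} (hc : c ∈ ufChains X n) :
    ∃ f ∈ ccZ ((coarseData X).MSp n), (∀ u, f (theta hbg n u) = ext c u.1) ∧
      Phi hbg n f = c := by
  let e := Equiv.ofBijective _ (theta_bij hbg n)
  have he : ∀ u, e.symm (theta hbg n u) = u := fun u => e.symm_apply_apply u
  refine ⟨fun x => ext c (e.symm x).1, ?_, fun u => by simp only [he], ?_⟩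
  · rw [theta_cc hbg]
    convert ext_mem hc using 1
    funext u
    simp only [Function.comp_apply, he]
  · funext v
    change ext c (e.symm (theta hbg n (pt v))).1 = c v
    rw [he]
    exact ext_pure c v

lemma bdry_eq {n : ℕ} {a : (coarseData X).MSp (n + 1) → ℤ}
    (ha : a ∈ ccZ ((coarseData X).MSp (n + 1))) (w : Pts X n) :
    (coarseData X).mBdry n a (theta hbg n w) = ext (ufBdry X n (Phi hbg (n + 1) a)) w.1 := by
  have hc := Phi_mem hbg ha
  rw [theta_bdry, ext_ufBdry hbg hc]
  refine Finset.sum_congr rfl fun i _ => ?_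
  congr 1
  have h1 : (fun u : Pts X (n + 1) => a (theta hbg (n + 1) u)) =
      fun u => ext (Phi hbg (n + 1) a) u.1 := by
    funext u; rw [ext_Phi hbg ha]
  have h2 : ∀ u : Pts X (n + 1), a (theta hbg (n + 1) u) = ext (Phi hbg (n + 1) a) u.1 :=
    fun u => congrFun h1 u
  rw [← finsum_mem_inter_support,
    ← finsum_mem_inter_support (ext (Phi hbg (n + 1) a))]
  apply finsum_mem_eq_of_bijOn Subtype.val
  · refine ⟨?_, Subtype.val_injective.injOn, ?_⟩
    · rintro u ⟨hu, hu'⟩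
      refine ⟨congrArg Subtype.val hu, ?_⟩
      rw [mem_support] at hu' ⊢
      rwa [← h2]
    · rintro u ⟨hu, hu'⟩
      obtain ⟨⟨M, hM⟩, r, hr⟩ := hc
      have hE : E X (n + 1) r ∈ u := by
        filter_upwards [ext_spec hM u] with v hv
        exact hr v (by rw [hv]; exact hu')
      refine ⟨⟨u, r, hE⟩, ⟨Subtype.ext hu, ?_⟩, rfl⟩
      rw [mem_support, h2]
      exact hu'
  · intro u _
    exact h2 u

lemma bdry_mem {n : ℕ} {a : (coarseData X).MSp (n + 1) → ℤ}
    (ha : a ∈ ccZ ((coarseData X).MSp (n + 1))) :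
    (coarseData X).mBdry n a ∈ ccZ ((coarseData X).MSp n) ∧
      Phi hbg n ((coarseData X).mBdry n a) = ufBdry X n (Phi hbg (n + 1) a) := by
  have hc := ufBdry_mem hbg (Phi_mem hbg ha)
  obtain ⟨f, hf, hfe, hfP⟩ := exists_of_uf hbg hc
  have : (coarseData X).mBdry n a = f := by
    funext x
    obtain ⟨u, rfl⟩ := (theta_bij hbg n).2 x
    rw [bdry_eq hbg ha, hfe]
  rw [this]
  exact ⟨hf, hfP⟩

lemma cyc_le : (n : ℕ) → (coarseData X).mCycles n ≤ ccZSub ((coarseData X).MSp n)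
  | 0 => le_refl _
  | (n + 1) => (AddSubgroup.closure_le _).2 fun _ ha => ha.1

lemma bd_le (hbg : BoundedGeometry X) (n : ℕ) : (coarseData X).mBdries n ≤ ccZSub ((coarseData X).MSp n) := by
  refine (AddSubgroup.closure_le _).2 ?_
  rintro _ ⟨a, ha, rfl⟩
  exact (bdry_mem hbg ha).1

lemma cyc_map : (n : ℕ) → ((coarseData X).mCycles n).map (Phi hbg n) = ufCycles X n
  | 0 => by
    ext c
    constructor
    · rintro ⟨f, hf, rfl⟩
      exact Phi_mem hbg hf
    · intro hc
      obtain ⟨f, hf, -, rfl⟩ := exists_of_uf hbg (n := 0) hc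
      exact ⟨f, hf, rfl⟩
  | (n + 1) => by
    rw [GroupoidData.mCycles, ufCycles, AddMonoidHom.map_closure]
    congr 1
    ext c
    constructor
    · rintro ⟨f, ⟨hf, hb⟩, rfl⟩
      refine ⟨Phi_mem hbg hf, ?_⟩
      rw [← (bdry_mem hbg hf).2, hb, map_zero]
    · rintro ⟨hc, hb⟩
      obtain ⟨f, hf, -, rfl⟩ := exists_of_uf hbg hc
      refine ⟨f, ⟨hf, ?_⟩, rfl⟩
      apply Phi_inj hbg n (bdry_mem hbg hf).1 (ccZSub _).zero_mem
      rw [(bdry_mem hbg hf).2, hb, map_zero]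

lemma bd_map (n : ℕ) : ((coarseData X).mBdries n).map (Phi hbg n) = ufBdries X n := by
  rw [GroupoidData.mBdries, ufBdries, AddMonoidHom.map_closure]
  congr 1
  ext c
  constructor
  · rintro ⟨_, ⟨a, ha, rfl⟩, rfl⟩
    exact ⟨_, Phi_mem hbg ha, ((bdry_mem hbg ha).2).symm⟩
  · rintro ⟨b, hb, rfl⟩
    obtain ⟨a, ha, -, rfl⟩ := exists_of_uf hbg hb
    exact ⟨_, ⟨a, ha, rfl⟩, (bdry_mem hbg ha).2⟩

lemma main_iso (hbg : BoundedGeometry X) (n : ℕ) : Nonempty ((coarseData X).Homology n ≃+ ufHomology X n) :=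
  quot_iso (Phi hbg n) (ccZSub _) _ _ _ _ (Phi_inj hbg n) (cyc_le n) (bd_le hbg n)
    (cyc_map hbg n) (bd_map hbg n)

end Gpd

end CG

/-- **Theorem G.**  Let `X` be a bounded geometry metric space and `G(X)` the associated
coarse groupoid.  Then there is a canonical isomorphism `H_*(G(X)) ≅ H_*^{uf}(X)` between
the groupoid homology of `G(X)` and the uniformly finite homology of `X`. -/
theorem coarse_groupoid_homology_iso_uf
    (X : Type u) [MetricSpace X] (hbg : BoundedGeometry X) :
    letI : TopologicalSpace (CoarseGpd X) := coarseTop X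
    ∀ n : ℕ, Nonempty ((coarseData X).Homology n ≃+ ufHomology X n) := by
  intro n
  exact CG.main_iso hbg n
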